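/- For E14 with H = ∂ₓ² + ∂_y² + b/z̄², X = ∂ₓ − i∂_y, L₁ = (i/2){M,X} + b/z̄, L₂ = M² + b z/z̄, where z = x+iy, z̄ = x−iy, M = x∂_y − y∂ₓ, the structure equations hold: [L₁,L₂] = −{X, L₂} − (1/2)X, [X,L₁] = −X², [X,L₂] = 2L₁. -/

import Mathlib

noncomputable section

open Complex

/-- Partial derivative in `x`. -/
def dx (f : ℝ × ℝ → ℂ) : ℝ × ℝ → ℂ := fun p => fderiv ℝ f p (1, 0)

/-- Partial derivative in `y`. -/
def dy (f : ℝ × ℝ → ℂ) : ℝ × ℝ → ℂ := fun p => fderiv ℝ f p (0, 1)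

/-- `z̄ = x − iy`. -/
def zbar (p : ℝ × ℝ) : ℂ := (p.1 : ℂ) - I * (p.2 : ℂ)

/-- `z = x + iy`. -/
def zc (p : ℝ × ℝ) : ℂ := (p.1 : ℂ) + I * (p.2 : ℂ)

/-- `M = x∂_y − y∂ₓ`. -/
def Mop (f : ℝ × ℝ → ℂ) : ℝ × ℝ → ℂ :=
  fun p => (p.1 : ℂ) * dy f p - (p.2 : ℂ) * dx f p

/-- `X = ∂ₓ − i∂_y`. -/
def Xop (f : ℝ × ℝ → ℂ) : ℝ × ℝ → ℂ := fun p => dx f p - I * dy f p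

/-- `H = ∂ₓ² + ∂_y² + b/z̄²`. -/
def Hop (b : ℂ) (f : ℝ × ℝ → ℂ) : ℝ × ℝ → ℂ :=
  fun p => dx (dx f) p + dy (dy f) p + b / (zbar p) ^ 2 * f p

/-- `L₁ = (i/2){M, X} + b/z̄`. -/
def L1 (b : ℂ) (f : ℝ × ℝ → ℂ) : ℝ × ℝ → ℂ :=
  fun p => (I / 2) * (Mop (Xop f) p + Xop (Mop f) p) + b / zbar p * f p

/-- `L₂ = M² + b z/z̄`. -/
def L2 (b : ℂ) (f : ℝ × ℝ → ℂ) : ℝ × ℝ → ℂ :=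
  fun p => Mop (Mop f) p + b * zc p / zbar p * f p

/-!
Everything follows from the commutation relations of `X` and `M` with each other and with
multiplication by `1/z̄` and `z/z̄`:
`[X, M] = iX`, `[X, 1/z̄] = 0`, `[X, z/z̄] = 2/z̄`, `[M, 1/z̄] = i/z̄`, `[M, z/z̄] = 2i z/z̄`.
Granted these, the structure equations are identities in an arbitrary associative algebra. The
relations themselves hold in any commutative algebra with two commuting derivations dual to a pair
of elements `x, y`, and the algebra of smooth functions on an open subset of the plane is of this
kind by the symmetry of second derivatives.
-/

section AssociativeAlgebra

attribute [local instance] LieRing.ofAssociativeRing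

variable {B : Type*} [Ring B] [Algebra ℂ B] {X M g h : B}

/-- The operator `L₁ = (i/2){M, X} + b h` formed in an associative algebra, where `h` plays the role
of multiplication by `1/z̄`. -/
def L1Elem (b : ℂ) (X M h : B) : B := (I / 2) • (M * X + X * M) + b • h

/-- The operator `L₂ = M² + b g` formed in an associative algebra, where `g` plays the role of
multiplication by `z/z̄`. -/
def L2Elem (b : ℂ) (M g : B) : B := M * M + b • g

theorem lie_X_L1Elem (b : ℂ) (hXM : ⁅X, M⁆ = I • X) (hXh : ⁅X, h⁆ = 0) :
    ⁅X, L1Elem b X M h⁆ = -(X * X) := by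
  have hanti : ⁅X, M * X + X * M⁆ = ⁅X, M⁆ * X + X * ⁅X, M⁆ := by
    simp only [Ring.lie_def]; noncomm_ring
  rw [L1Elem, lie_add, lie_smul, lie_smul, hanti, hXM, hXh, smul_mul_assoc, mul_smul_comm]
  match_scalars
  linear_combination I_mul_I

theorem lie_X_L2Elem (b : ℂ) (hXM : ⁅X, M⁆ = I • X) (hXg : ⁅X, g⁆ = (2 : ℂ) • h) :
    ⁅X, L2Elem b M g⁆ = (2 : ℂ) • L1Elem b X M h := by
  have hsq : ⁅X, M * M⁆ = ⁅X, M⁆ * M + M * ⁅X, M⁆ := by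
    simp only [Ring.lie_def]; noncomm_ring
  rw [L1Elem, L2Elem, lie_add, lie_smul, hsq, hXM, hXg, smul_mul_assoc, mul_smul_comm]
  module

theorem lie_anticommutator_mul_self (hXM : ⁅X, M⁆ = I • X) :
    ⁅(I / 2) • (M * X + X * M), M * M⁆ =
      -(X * (M * M) + M * M * X) - (1 / 2 : ℂ) • X := by
  have hdouble : ⁅X, M⁆ * M - M * ⁅X, M⁆ = -X := by
    rw [hXM, smul_mul_assoc, mul_smul_comm, ← smul_sub, ← Ring.lie_def, hXM, smul_smul, I_mul_I,
      neg_one_smul]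
  have hlie : ⁅M * X + X * M, M * M⁆ =
      M * M * ⁅X, M⁆ + (2 : ℂ) • (M * ⁅X, M⁆ * M) + ⁅X, M⁆ * (M * M) := by
    rw [two_smul]; simp only [Ring.lie_def]; noncomm_ring
  have hmid : (2 : ℂ) • (M * X * M) = M * M * X + X * (M * M) + X := by
    rw [two_smul, ← sub_eq_iff_eq_add', ← neg_inj, ← hdouble]
    simp only [Ring.lie_def]; noncomm_ring
  calc ⁅(I / 2) • (M * X + X * M), M * M⁆
      = (I / 2 * I) • (M * M * X + (2 : ℂ) • (M * X * M) + X * (M * M)) := by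
        rw [smul_lie, hlie, hXM]
        simp only [smul_mul_assoc, mul_smul_comm, smul_add, smul_smul]
        module
    _ = -(X * (M * M) + M * M * X) - (1 / 2 : ℂ) • X := by
        rw [hmid, div_mul_eq_mul_div, I_mul_I]
        module

theorem lie_anticommutator_add_lie_mul_self (hXg : ⁅X, g⁆ = (2 : ℂ) • h)
    (hMh : ⁅M, h⁆ = I • h) (hMg : ⁅M, g⁆ = (2 * I) • g) :
    ⁅(I / 2) • (M * X + X * M), g⁆ + ⁅h, M * M⁆ = -(X * g + g * X) := by
  have hlie_g : ⁅M * X + X * M, g⁆ =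
      M * ⁅X, g⁆ + ⁅M, g⁆ * X + (X * ⁅M, g⁆ + ⁅X, g⁆ * M) := by
    simp only [Ring.lie_def]; noncomm_ring
  have hlie_h : ⁅h, M * M⁆ = -(⁅M, h⁆ * M + M * ⁅M, h⁆) := by
    simp only [Ring.lie_def]; noncomm_ring
  rw [smul_lie, hlie_g, hlie_h, hXg, hMh, hMg]
  simp only [smul_mul_assoc, mul_smul_comm]
  match_scalars
  · ring
  · linear_combination I_mul_I
  · linear_combination I_mul_I
  · ring

theorem lie_L1Elem_L2Elem (b : ℂ) (hXM : ⁅X, M⁆ = I • X) (hXg : ⁅X, g⁆ = (2 : ℂ) • h)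
    (hMh : ⁅M, h⁆ = I • h) (hMg : ⁅M, g⁆ = (2 * I) • g) (hhg : ⁅h, g⁆ = 0) :
    ⁅L1Elem b X M h, L2Elem b M g⁆ =
      -(X * L2Elem b M g + L2Elem b M g * X) - (1 / 2 : ℂ) • X := by
  have hcross := lie_anticommutator_add_lie_mul_self hXg hMh hMg
  calc ⁅L1Elem b X M h, L2Elem b M g⁆
      = ⁅(I / 2) • (M * X + X * M), M * M⁆
          + b • (⁅(I / 2) • (M * X + X * M), g⁆ + ⁅h, M * M⁆) + (b * b) • ⁅h, g⁆ := by
        simp only [L1Elem, L2Elem, add_lie, lie_add, smul_lie b, lie_smul b]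
        module
    _ = -(X * L2Elem b M g + L2Elem b M g * X) - (1 / 2 : ℂ) • X := by
        rw [lie_anticommutator_mul_self hXM, hcross, hhg, L2Elem]
        simp only [mul_add, add_mul, mul_smul_comm, smul_mul_assoc]
        module

end AssociativeAlgebra

theorem lie_coe_lmul {R A : Type*} [CommRing R] [CommRing A] [Algebra R A]
    (D : Derivation R A A) (a : A) :
    ⁅(D : Module.End R A), Algebra.lmul R A a⁆ = Algebra.lmul R A (D a) := by
  ext c
  simp [Ring.lie_def, mul_comm c]

section CoordinatePair

variable {A : Type*} [CommRing A] [Algebra ℂ A]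

/-- The derivations `∂ₓ`, `∂_y` of a commutative algebra behave like the partial derivatives in the
coordinates `x`, `y`: they commute and are dual to `x`, `y`. -/
structure IsCoordinatePair (Dx Dy : Derivation ℂ A A) (x y : A) : Prop where
  lie_eq_zero : ⁅Dx, Dy⁆ = 0
  Dx_x : Dx x = 1
  Dx_y : Dx y = 0
  Dy_x : Dy x = 0
  Dy_y : Dy y = 1

/-- The operator `X = ∂ₓ − i∂_y` as a derivation of a commutative algebra. -/
def XDer (Dx Dy : Derivation ℂ A A) : Derivation ℂ A A := Dx - I • Dy

/-- The operator `M = x∂_y − y∂ₓ` as a derivation of a commutative algebra. -/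
def MDer (Dx Dy : Derivation ℂ A A) (x y : A) : Derivation ℂ A A := x • Dy - y • Dx

/-- The operator `L₁ = (i/2){M, X} + b/z̄` on a commutative algebra, `w` being the inverse of
`z̄`. -/
def L1End (b : ℂ) (Dx Dy : Derivation ℂ A A) (x y w : A) : Module.End ℂ A :=
  L1Elem b (XDer Dx Dy : Module.End ℂ A) (MDer Dx Dy x y) (Algebra.lmul ℂ A w)

/-- The operator `L₂ = M² + b z/z̄` on a commutative algebra, `w` being the inverse of `z̄`. -/
def L2End (b : ℂ) (Dx Dy : Derivation ℂ A A) (x y w : A) : Module.End ℂ A :=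
  L2Elem b (MDer Dx Dy x y : Module.End ℂ A) (Algebra.lmul ℂ A ((x + I • y) * w))

namespace IsCoordinatePair

variable {Dx Dy : Derivation ℂ A A} {x y w : A}

theorem lie_XDer_MDer (hc : IsCoordinatePair Dx Dy x y) :
    ⁅XDer Dx Dy, MDer Dx Dy x y⁆ = I • XDer Dx Dy := by
  ext a
  have hcomm : Dx (Dy a) = Dy (Dx a) := by
    rw [← sub_eq_zero, ← Derivation.commutator_apply, hc.lie_eq_zero, Derivation.zero_apply]
  simp only [XDer, MDer, Derivation.commutator_apply, Derivation.sub_apply, Derivation.smul_apply,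
    map_sub, Derivation.map_smul, Derivation.leibniz, smul_eq_mul, hc.Dx_x, hc.Dx_y, hc.Dy_x,
    hc.Dy_y, hcomm, mul_sub, mul_smul_comm, smul_sub, smul_smul, I_mul_I,
    mul_one, mul_zero]
  module

theorem XDer_z (hc : IsCoordinatePair Dx Dy x y) : XDer Dx Dy (x + I • y) = (2 : ℂ) • 1 := by
  simp only [XDer, Derivation.sub_apply, Derivation.smul_apply, map_add, Derivation.map_smul,
    hc.Dx_x, hc.Dx_y, hc.Dy_x, hc.Dy_y]
  match_scalars
  linear_combination -I_mul_I

theorem XDer_zbar (hc : IsCoordinatePair Dx Dy x y) : XDer Dx Dy (x - I • y) = 0 := by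
  simp only [XDer, Derivation.sub_apply, Derivation.smul_apply, map_sub, Derivation.map_smul,
    hc.Dx_x, hc.Dx_y, hc.Dy_x, hc.Dy_y, smul_sub, smul_smul, I_mul_I]
  module

theorem MDer_z (hc : IsCoordinatePair Dx Dy x y) :
    MDer Dx Dy x y (x + I • y) = I • (x + I • y) := by
  simp only [MDer, Derivation.sub_apply, Derivation.smul_apply, map_add, Derivation.map_smul,
    hc.Dx_x, hc.Dx_y, hc.Dy_x, hc.Dy_y, smul_eq_mul, smul_add, smul_smul, I_mul_I,
    mul_one, mul_zero]
  module

theorem MDer_zbar (hc : IsCoordinatePair Dx Dy x y) :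
    MDer Dx Dy x y (x - I • y) = -(I • (x - I • y)) := by
  simp only [MDer, Derivation.sub_apply, Derivation.smul_apply, map_sub, Derivation.map_smul,
    hc.Dx_x, hc.Dx_y, hc.Dy_x, hc.Dy_y, smul_eq_mul, smul_sub, smul_smul, I_mul_I,
    mul_one, mul_zero]
  module

theorem XDer_inv_zbar (hc : IsCoordinatePair Dx Dy x y) (hw : w * (x - I • y) = 1) :
    XDer Dx Dy w = 0 := by
  rw [Derivation.leibniz_of_mul_eq_one _ hw, hc.XDer_zbar, smul_zero]

theorem MDer_inv_zbar (hc : IsCoordinatePair Dx Dy x y) (hw : w * (x - I • y) = 1) :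
    MDer Dx Dy x y w = I • w := by
  rw [Derivation.leibniz_of_mul_eq_one _ hw, hc.MDer_zbar, smul_neg, neg_smul, neg_neg,
    smul_comm, smul_eq_mul, sq, mul_assoc, hw, mul_one]

theorem XDer_z_div_zbar (hc : IsCoordinatePair Dx Dy x y) (hw : w * (x - I • y) = 1) :
    XDer Dx Dy ((x + I • y) * w) = (2 : ℂ) • w := by
  rw [Derivation.leibniz, hc.XDer_inv_zbar hw, hc.XDer_z, smul_zero, zero_add, smul_comm,
    smul_eq_mul, mul_one]

theorem MDer_z_div_zbar (hc : IsCoordinatePair Dx Dy x y) (hw : w * (x - I • y) = 1) :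
    MDer Dx Dy x y ((x + I • y) * w) = (2 * I) • ((x + I • y) * w) := by
  rw [Derivation.leibniz, hc.MDer_inv_zbar hw, hc.MDer_z, smul_eq_mul, smul_eq_mul,
    mul_smul_comm, mul_smul_comm, mul_comm w, ← two_smul ℂ, smul_smul]

theorem lie_coe_XDer_MDer (hc : IsCoordinatePair Dx Dy x y) :
    ⁅(XDer Dx Dy : Module.End ℂ A), (MDer Dx Dy x y : Module.End ℂ A)⁆ =
      I • (XDer Dx Dy : Module.End ℂ A) := by
  rw [← Derivation.commutator_coe_linear_map, hc.lie_XDer_MDer, Derivation.coe_smul_linearMap]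

theorem lie_XDer_lmul_z_div_zbar (hc : IsCoordinatePair Dx Dy x y) (hw : w * (x - I • y) = 1) :
    ⁅(XDer Dx Dy : Module.End ℂ A), Algebra.lmul ℂ A ((x + I • y) * w)⁆ =
      (2 : ℂ) • Algebra.lmul ℂ A w := by
  rw [lie_coe_lmul, hc.XDer_z_div_zbar hw, map_smul]

theorem lie_XDer_L1End (b : ℂ) (hc : IsCoordinatePair Dx Dy x y) (hw : w * (x - I • y) = 1) :
    ⁅(XDer Dx Dy : Module.End ℂ A), L1End b Dx Dy x y w⁆ =
      -((XDer Dx Dy : Module.End ℂ A) * XDer Dx Dy) :=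
  lie_X_L1Elem b hc.lie_coe_XDer_MDer (by rw [lie_coe_lmul, hc.XDer_inv_zbar hw, map_zero])

theorem lie_XDer_L2End (b : ℂ) (hc : IsCoordinatePair Dx Dy x y) (hw : w * (x - I • y) = 1) :
    ⁅(XDer Dx Dy : Module.End ℂ A), L2End b Dx Dy x y w⁆ = (2 : ℂ) • L1End b Dx Dy x y w :=
  lie_X_L2Elem b hc.lie_coe_XDer_MDer (hc.lie_XDer_lmul_z_div_zbar hw)

theorem lie_L1End_L2End (b : ℂ) (hc : IsCoordinatePair Dx Dy x y) (hw : w * (x - I • y) = 1) :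
    ⁅L1End b Dx Dy x y w, L2End b Dx Dy x y w⁆ =
      -((XDer Dx Dy : Module.End ℂ A) * L2End b Dx Dy x y w +
          L2End b Dx Dy x y w * (XDer Dx Dy : Module.End ℂ A)) -
        (1 / 2 : ℂ) • (XDer Dx Dy : Module.End ℂ A) := by
  refine lie_L1Elem_L2Elem b hc.lie_coe_XDer_MDer (hc.lie_XDer_lmul_z_div_zbar hw) ?_ ?_ ?_
  · rw [lie_coe_lmul, hc.MDer_inv_zbar hw, map_smul]
  · rw [lie_coe_lmul, hc.MDer_z_div_zbar hw, map_smul]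
  · rw [Ring.lie_def, ← map_mul, ← map_mul, mul_comm, sub_self]

end IsCoordinatePair

end CoordinatePair

section SmoothFunctions

open TopologicalSpace
open scoped ContDiff

variable {𝕜 E 𝔸 : Type*} [NontriviallyNormedField 𝕜] [NormedAddCommGroup E] [NormedSpace 𝕜 E]
  [NormedCommRing 𝔸] [NormedAlgebra 𝕜 𝔸] {U : Opens E}

variable (𝕜 U 𝔸) in
/-- The algebra of smooth functions on the open set `U`, as functions on the subtype `U`; smoothness
is that of an arbitrary extension to the whole space. -/
def smoothFunctions : Subalgebra 𝔸 (U → 𝔸) where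
  carrier := {f | ∃ F : E → 𝔸, ContDiffOn 𝕜 ∞ F U ∧ ∀ p : U, f p = F p}
  mul_mem' := by
    rintro f g ⟨F, hF, hfF⟩ ⟨G, hG, hgG⟩
    exact ⟨F * G, hF.mul hG, fun p => by simp only [Pi.mul_apply, hfF, hgG]⟩
  add_mem' := by
    rintro f g ⟨F, hF, hfF⟩ ⟨G, hG, hgG⟩
    exact ⟨F + G, hF.add hG, fun p => by simp only [Pi.add_apply, hfF, hgG]⟩
  algebraMap_mem' c := ⟨fun _ => c, contDiffOn_const, fun _ => rfl⟩

namespace smoothFunctions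

/-- The restriction to `U` of a function that is smooth on `U`. -/
def restrict (F : E → 𝔸) (hF : ContDiffOn 𝕜 ∞ F U) : smoothFunctions 𝕜 𝔸 U :=
  ⟨fun p => F p, F, hF, fun _ => rfl⟩

/-- A chosen extension of a smooth function on `U` to the whole space, to which `fderiv` can be
applied. -/
def extension (f : smoothFunctions 𝕜 𝔸 U) : E → 𝔸 := f.2.choose

theorem contDiffOn_extension (f : smoothFunctions 𝕜 𝔸 U) : ContDiffOn 𝕜 ∞ (extension f) U :=
  f.2.choose_spec.1

theorem extension_apply (f : smoothFunctions 𝕜 𝔸 U) (p : U) : extension f p = f.1 p :=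
  (f.2.choose_spec.2 p).symm

theorem differentiableAt_extension (f : smoothFunctions 𝕜 𝔸 U) (p : U) :
    DifferentiableAt 𝕜 (extension f) p :=
  ((contDiffOn_extension f).contDiffAt (U.isOpen.mem_nhds p.2)).differentiableAt (by simp)

theorem fderiv_extension_eq {f : smoothFunctions 𝕜 𝔸 U} {F : E → 𝔸} (hfF : ∀ p : U, f.1 p = F p)
    (p : U) : fderiv 𝕜 (extension f) p = fderiv 𝕜 F p := by
  refine Filter.EventuallyEq.fderiv_eq ?_
  filter_upwards [U.isOpen.mem_nhds p.2] with q hq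
  exact (extension_apply f ⟨q, hq⟩).trans (hfF ⟨q, hq⟩)

theorem contDiffOn_fderiv_apply {F : E → 𝔸} (hF : ContDiffOn 𝕜 ∞ F U) (v : E) :
    ContDiffOn 𝕜 ∞ (fun p => fderiv 𝕜 F p v) U :=
  (hF.fderiv_of_isOpen U.isOpen (by simp)).clm_apply contDiffOn_const

variable (𝕜 𝔸 U) in
/-- The derivative in the direction `v`, as a derivation of the algebra of smooth functions. -/
def dirDeriv (v : E) : Derivation 𝔸 (smoothFunctions 𝕜 𝔸 U) (smoothFunctions 𝕜 𝔸 U) :=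
  Derivation.mk'
    { toFun := fun f => restrict _ (contDiffOn_fderiv_apply (contDiffOn_extension f) v)
      map_add' := fun f g => by
        ext p
        have hfg : ∀ q : U, (f + g).1 q = (extension f + extension g) q := fun q => by
          simp [extension_apply]
        simp [restrict, fderiv_extension_eq hfg,
          fderiv_add (differentiableAt_extension f p) (differentiableAt_extension g p)]
      map_smul' := fun c f => by
        ext p
        have hcf : ∀ q : U, (c • f).1 q = c * extension f q := fun q => by
          simp [extension_apply]
        simp [restrict, fderiv_extension_eq (F := fun q => c * extension f q) hcf,
          fderiv_const_mul (differentiableAt_extension f p)] }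
    fun f g => by
      ext p
      have hfg : ∀ q : U, (f * g).1 q = (extension f * extension g) q := fun q => by
        simp [extension_apply]
      simp [restrict, fderiv_extension_eq hfg, extension_apply,
        fderiv_mul (differentiableAt_extension f p) (differentiableAt_extension g p)]

theorem dirDeriv_apply {f : smoothFunctions 𝕜 𝔸 U} {F : E → 𝔸} (hfF : ∀ p : U, f.1 p = F p)
    (v : E) (p : U) : (dirDeriv 𝕜 𝔸 U v f).1 p = fderiv 𝕜 F p v :=
  congrArg (· v) (fderiv_extension_eq hfF p)

theorem dirDeriv_dirDeriv_apply (f : smoothFunctions 𝕜 𝔸 U) (v w : E) (p : U) :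
    (dirDeriv 𝕜 𝔸 U v (dirDeriv 𝕜 𝔸 U w f)).1 p =
      fderiv 𝕜 (fderiv 𝕜 (extension f)) p v w := by
  have hdiff : DifferentiableAt 𝕜 (fderiv 𝕜 (extension f)) p :=
    (((contDiffOn_extension f).fderiv_of_isOpen U.isOpen (m := ∞) (by simp)).contDiffAt
      (U.isOpen.mem_nhds p.2)).differentiableAt (by simp)
  rw [dirDeriv_apply (F := fun q => fderiv 𝕜 (extension f) q w) (fun _ => rfl),
    fderiv_clm_apply hdiff (differentiableAt_const w)]
  simp

theorem lie_dirDeriv [IsRCLikeNormedField 𝕜] (v w : E) :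
    ⁅dirDeriv 𝕜 𝔸 U v, dirDeriv 𝕜 𝔸 U w⁆ = 0 := by
  ext f p
  have hsymm : IsSymmSndFDerivAt 𝕜 (extension f) p :=
    ((contDiffOn_extension f).contDiffAt (U.isOpen.mem_nhds p.2)).isSymmSndFDerivAt
      (by rw [minSmoothness_of_isRCLikeNormedField]; exact WithTop.coe_le_coe.mpr le_top)
  simp [Derivation.commutator_apply, dirDeriv_dirDeriv_apply, hsymm v w]

end smoothFunctions

/-- The endomorphism `T` of the smooth functions on `U` is induced by the operator `P` on functions
on the whole space: it sends the restriction of `F` to the restriction of `P F`. -/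
def ActsAs (T : Module.End 𝔸 (smoothFunctions 𝕜 𝔸 U)) (P : (E → 𝔸) → E → 𝔸) : Prop :=
  ∀ f F, (∀ p : U, f.1 p = F p) → ∀ p : U, (T f).1 p = P F p

namespace ActsAs

variable {S T : Module.End 𝔸 (smoothFunctions 𝕜 𝔸 U)} {P Q : (E → 𝔸) → E → 𝔸}

theorem add (hS : ActsAs S P) (hT : ActsAs T Q) : ActsAs (S + T) fun F p => P F p + Q F p :=
  fun f F hfF p => congrArg₂ (· + ·) (hS f F hfF p) (hT f F hfF p)

theorem sub (hS : ActsAs S P) (hT : ActsAs T Q) : ActsAs (S - T) fun F p => P F p - Q F p :=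
  fun f F hfF p => congrArg₂ (· - ·) (hS f F hfF p) (hT f F hfF p)

theorem neg (hT : ActsAs T P) : ActsAs (-T) fun F p => -P F p :=
  fun f F hfF p => congrArg (- ·) (hT f F hfF p)

theorem smul (c : 𝔸) (hT : ActsAs T P) : ActsAs (c • T) fun F p => c * P F p :=
  fun f F hfF p => congrArg (c * ·) (hT f F hfF p)

theorem mul (hS : ActsAs S P) (hT : ActsAs T Q) : ActsAs (S * T) fun F => P (Q F) :=
  fun f F hfF => hS (T f) (Q F) (hT f F hfF)

theorem lmul {g : smoothFunctions 𝕜 𝔸 U} {G : E → 𝔸} (hgG : ∀ p : U, g.1 p = G p) :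
    ActsAs (Algebra.lmul 𝔸 _ g) fun F p => G p * F p :=
  fun _ _ hfF p => congrArg₂ (· * ·) (hgG p) (hfF p)

theorem lie (hS : ActsAs S P) (hT : ActsAs T Q) :
    ActsAs ⁅S, T⁆ fun F p => P (Q F) p - Q (P F) p :=
  (hS.mul hT).sub (hT.mul hS)

theorem apply_eq (hS : ActsAs S P) (hT : ActsAs T Q) (hST : S = T) {F : E → 𝔸}
    (hF : ContDiffOn 𝕜 ∞ F U) (p : U) : P F p = Q F p := by
  let f := smoothFunctions.restrict F hF
  rw [← hS f F (fun _ => rfl), ← hT f F (fun _ => rfl), hST]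

end ActsAs

end SmoothFunctions

section Plane

open TopologicalSpace smoothFunctions
open scoped ContDiff

variable (U : Opens (ℝ × ℝ))

/-- The coordinate `x` as a smooth function on `U`. -/
def xCoord : smoothFunctions ℝ ℂ U :=
  restrict (fun p => (p.1 : ℂ)) (ofRealCLM.contDiff.comp contDiff_fst).contDiffOn

/-- The coordinate `y` as a smooth function on `U`. -/
def yCoord : smoothFunctions ℝ ℂ U :=
  restrict (fun p => (p.2 : ℂ)) (ofRealCLM.contDiff.comp contDiff_snd).contDiffOn

theorem dirDeriv_xCoord (v : ℝ × ℝ) :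
    dirDeriv ℝ ℂ U v (xCoord U) = algebraMap ℂ _ (v.1 : ℂ) := by
  ext p
  rw [dirDeriv_apply (F := ofRealCLM ∘L .fst ℝ ℝ ℝ) (fun _ => rfl), ContinuousLinearMap.fderiv]
  rfl

theorem dirDeriv_yCoord (v : ℝ × ℝ) :
    dirDeriv ℝ ℂ U v (yCoord U) = algebraMap ℂ _ (v.2 : ℂ) := by
  ext p
  rw [dirDeriv_apply (F := ofRealCLM ∘L .snd ℝ ℝ ℝ) (fun _ => rfl), ContinuousLinearMap.fderiv]
  rfl

/-- The partial derivative `∂ₓ` as a derivation of the smooth functions on `U`. -/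
def partialX : Derivation ℂ (smoothFunctions ℝ ℂ U) (smoothFunctions ℝ ℂ U) :=
  dirDeriv ℝ ℂ U (1, 0)

/-- The partial derivative `∂_y` as a derivation of the smooth functions on `U`. -/
def partialY : Derivation ℂ (smoothFunctions ℝ ℂ U) (smoothFunctions ℝ ℂ U) :=
  dirDeriv ℝ ℂ U (0, 1)

theorem isCoordinatePair_partial :
    IsCoordinatePair (partialX U) (partialY U) (xCoord U) (yCoord U) where
  lie_eq_zero := lie_dirDeriv _ _
  Dx_x := by simp [partialX, dirDeriv_xCoord]
  Dx_y := by simp [partialX, dirDeriv_yCoord]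
  Dy_x := by simp [partialY, dirDeriv_xCoord]
  Dy_y := by simp [partialY, dirDeriv_yCoord]

theorem actsAs_XDer : ActsAs (XDer (partialX U) (partialY U)).toLinearMap Xop :=
  fun _ _ hfF p =>
    congrArg₂ (· - I * ·) (dirDeriv_apply hfF (1, 0) p) (dirDeriv_apply hfF (0, 1) p)

theorem actsAs_MDer :
    ActsAs (MDer (partialX U) (partialY U) (xCoord U) (yCoord U)).toLinearMap Mop :=
  fun _ _ hfF p => congrArg₂ (fun s t => (p.1.1 : ℂ) * s - (p.1.2 : ℂ) * t)
    (dirDeriv_apply hfF (0, 1) p) (dirDeriv_apply hfF (1, 0) p)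

theorem contDiff_zbar : ContDiff ℝ ∞ zbar :=
  (ofRealCLM.contDiff.comp contDiff_fst).sub
    (contDiff_const.mul (ofRealCLM.contDiff.comp contDiff_snd))

/-- The domain `z̄ ≠ 0`. -/
def puncturedPlane : Opens (ℝ × ℝ) :=
  ⟨{p | zbar p ≠ 0}, isOpen_ne_fun contDiff_zbar.continuous continuous_const⟩

/-- The function `1/z̄` on the domain `z̄ ≠ 0`. -/
def invZbar : smoothFunctions ℝ ℂ puncturedPlane :=
  restrict (fun p => (zbar p)⁻¹) (contDiff_zbar.contDiffOn.inv fun _ hp => hp)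

theorem invZbar_mul_zbar : invZbar * (xCoord puncturedPlane - I • yCoord puncturedPlane) = 1 := by
  ext p
  exact inv_mul_cancel₀ p.2

theorem actsAs_L1End (b : ℂ) :
    ActsAs (L1End b (partialX _) (partialY _) (xCoord _) (yCoord _) invZbar) (L1 b) := by
  intro f F hfF p
  have hX := actsAs_XDer puncturedPlane
  have hM := actsAs_MDer puncturedPlane
  have hw := ActsAs.lmul (g := invZbar) (G := fun p => (zbar p)⁻¹) fun _ => rfl
  refine (((((hM.mul hX).add (hX.mul hM)).smul (I / 2)).add (hw.smul b)) f F hfF p).trans ?_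
  simp only [L1]
  ring

theorem actsAs_L2End (b : ℂ) :
    ActsAs (L2End b (partialX _) (partialY _) (xCoord _) (yCoord _) invZbar) (L2 b) := by
  intro f F hfF p
  have hM := actsAs_MDer puncturedPlane
  have hzw := ActsAs.lmul (g := (xCoord _ + I • yCoord _) * invZbar)
    (G := fun p => zc p * (zbar p)⁻¹) fun _ => rfl
  refine (((hM.mul hM).add (hzw.smul b)) f F hfF p).trans ?_
  simp only [L2]
  ring

end Plane

/-- E14 structure equations, on the domain `z̄ ≠ 0`:
`[L₁,L₂] = −{X, L₂} − (1/2)X`, `[X,L₁] = −X²`, `[X,L₂] = 2L₁`. -/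
theorem stmt12 (b : ℂ) (f : ℝ × ℝ → ℂ)
    (hf : ContDiffOn ℝ (⊤ : ℕ∞) f {p : ℝ × ℝ | zbar p ≠ 0}) :
    (∀ p : ℝ × ℝ, zbar p ≠ 0 →
      L1 b (L2 b f) p - L2 b (L1 b f) p =
        -(Xop (L2 b f) p + L2 b (Xop f) p) - (1 / 2 : ℂ) * Xop f p) ∧
    (∀ p : ℝ × ℝ, zbar p ≠ 0 →
      Xop (L1 b f) p - L1 b (Xop f) p = -(Xop (Xop f) p)) ∧
    (∀ p : ℝ × ℝ, zbar p ≠ 0 →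
      Xop (L2 b f) p - L2 b (Xop f) p = 2 * L1 b f p) := by
  have hc := isCoordinatePair_partial puncturedPlane
  have hw := invZbar_mul_zbar
  have hX := actsAs_XDer puncturedPlane
  have hL1 := actsAs_L1End b
  have hL2 := actsAs_L2End b
  refine ⟨fun p hp => ?_, fun p hp => ?_, fun p hp => ?_⟩
  · exact (hL1.lie hL2).apply_eq (((hX.mul hL2).add (hL2.mul hX)).neg.sub (hX.smul (1 / 2)))
      (hc.lie_L1End_L2End b hw) hf ⟨p, hp⟩
  · exact (hX.lie hL1).apply_eq (hX.mul hX).neg (hc.lie_XDer_L1End b hw) hf ⟨p, hp⟩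
  · exact (hX.lie hL2).apply_eq (hL1.smul 2) (hc.lie_XDer_L2End b hw) hf ⟨p, hp⟩
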